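/- Fix an integer d ≥ 2 and a unit vector ψ ∈ ℂ^d. Consider single-call probabilistic protocols (S, S_ch) with d_F = d, together with p ∈ ℝ, satisfying S ⋆ U = p · U†|ψ⟩⟨ψ|U for all U ∈ SU(d) (exact probabilistic unitary inversion on the known pure state ψ, since U^{-1} = U† for unitary U). If d > 2, then every such protocol has p = 0. If d = 2, then every such protocol has p ≤ 1/2 and there exists one with p = 1/2; hence the maximal success probability equals 1/2 for d = 2 and 0 for d > 2. -/

import Mathlib

open Matrix Kronecker BigOperators ComplexOrder

noncomputable section

/-- Entrywise complex conjugate `U̅` of a matrix. -/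
def mconj {d : ℕ} (U : Matrix (Fin d) (Fin d) ℂ) : Matrix (Fin d) (Fin d) ℂ :=
  U.map (starRingEnd ℂ)

/-- Rank-one outer product `|v⟩⟨v|`. -/
def outer {n : Type*} (v : n → ℂ) : Matrix n n ℂ :=
  Matrix.vecMulVec v (star v)

/-- Choi vector `|U⟩⟩ = Σ_i e_i ⊗ U e_i`. -/
def choiVec {d : ℕ} (U : Matrix (Fin d) (Fin d) ℂ) : Fin d × Fin d → ℂ :=
  fun p => U p.2 p.1

/-- `|U⟩⟩⟨⟨U|`. -/
def choiProj {d : ℕ} (U : Matrix (Fin d) (Fin d) ℂ) :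
    Matrix (Fin d × Fin d) (Fin d × Fin d) ℂ :=
  outer (choiVec U)

/-- Partial trace over the first tensor factor. -/
def ptrLeft {α β : Type*} [Fintype α] (S : Matrix (α × β) (α × β) ℂ) :
    Matrix β β ℂ :=
  fun b b' => ∑ a, S (a, b) (a, b')

/-- Partial trace over the second (last) tensor factor. -/
def ptrRight {α β : Type*} [Fintype β] (S : Matrix (α × β) (α × β) ℂ) :
    Matrix α α ℂ :=
  fun a a' => ∑ b, S (a, b) (a', b)

/-- Action `S ⋆ U := Tr_{IO}[ S · (|U̅⟩⟩⟨⟨U̅|_{IO} ⊗ 1_F) ]` of a single-call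
supermap `S` on `I ⊗ O ⊗ F` applied to the unitary channel given by `U`. -/
def act {d dF : ℕ}
    (S : Matrix ((Fin d × Fin d) × Fin dF) ((Fin d × Fin d) × Fin dF) ℂ)
    (U : Matrix (Fin d) (Fin d) ℂ) : Matrix (Fin dF) (Fin dF) ℂ :=
  ptrLeft (S * (choiProj (mconj U) ⊗ₖ (1 : Matrix (Fin dF) (Fin dF) ℂ)))

/-- A single-call probabilistic protocol: `0 ≤ S ≤ S_ch` with
`Tr_F(S_ch) = σ ⊗ 1_d`, `σ ≥ 0`, `Tr σ = 1`. -/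
def IsProtocol {d dF : ℕ}
    (S Sch : Matrix ((Fin d × Fin d) × Fin dF) ((Fin d × Fin d) × Fin dF) ℂ) : Prop :=
  S.PosSemidef ∧ (Sch - S).PosSemidef ∧
    ∃ σ : Matrix (Fin d) (Fin d) ℂ, σ.PosSemidef ∧ σ.trace = 1 ∧
      ptrRight Sch = σ ⊗ₖ (1 : Matrix (Fin d) (Fin d) ℂ)

/-!
If `x` is orthogonal to `U†ψ`, then `S` has zero expectation at `|U̅⟩⟩ ⊗ x`, so positivity of `S`
makes it kill this vector. Rotate `ψ` to a basis vector `e_r`, so that `U†ψ` becomes row `r` of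
`V = U̅`. Changing the sign of row `i` of `V` preserves the orthogonality, so `S` kills the
contribution of each row separately. A map killing every pair (row `r`, orthogonal vector) vanishes
on all pairs by polarisation, so row `r` never contributes. For `d ≥ 3` any other row can be
chosen independently of `x`, because there is room for a row `r` orthogonal to both; hence `S` acts
as zero and `p = 0`. For `d = 2` only the row other than `r` survives; taking it to be `e_j` shows
that `p` is at most the diagonal entry `σ_jj` for both `j`, whence `2p ≤ Tr σ = 1`.

The bound is attained by sending half of a singlet through the channel and projecting the output
onto a suitable state: `J Uᵀ Jᵀ = adj U = U†` for `U ∈ SU(2)` and `J` the singlet matrix, so the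
other half collapses to `U†ψ`.
-/

section UnitaryMatrices

variable {n : Type*} [Fintype n] [DecidableEq n]

theorem permMatrix_mem_unitaryGroup (σ : Equiv.Perm n) :
    σ.permMatrix ℂ ∈ unitaryGroup n ℂ := by
  rw [mem_unitaryGroup_iff, star_eq_conjTranspose, conjTranspose_permMatrix, ← permMatrix_mul,
    inv_mul_cancel, permMatrix_one]

theorem star_mulVec_dotProduct_mulVec {U : Matrix n n ℂ} (hU : U ∈ unitaryGroup n ℂ)
    (v w : n → ℂ) : star (U *ᵥ v) ⬝ᵥ (U *ᵥ w) = star v ⬝ᵥ w := by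
  rw [star_mulVec, ← dotProduct_mulVec, mulVec_mulVec, ← star_eq_conjTranspose,
    mem_unitaryGroup_iff'.1 hU, one_mulVec]

theorem eq_sum_vecMulVec_single_row (V : Matrix n n ℂ) :
    V = ∑ i, vecMulVec (Pi.single i 1) (V i) := by
  ext a b
  simp [Matrix.sum_apply, vecMulVec_apply, Pi.single_apply]

theorem exists_mem_unitaryGroup_col_eq {v : n → ℂ} (hv : star v ⬝ᵥ v = 1) (r : n) :
    ∃ W ∈ unitaryGroup n ℂ, W.col r = v := by
  have hon : Orthonormal ℂ (({r} : Set n).domRestrict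
      fun _ : n => (WithLp.toLp 2 v : EuclideanSpace ℂ n)) := by
    refine orthonormal_iff_ite.2 fun i j => ?_
    rw [if_pos (Subsingleton.elim i j), Set.domRestrict_apply, Set.domRestrict_apply,
      EuclideanSpace.inner_toLp_toLp, dotProduct_comm, hv]
  obtain ⟨b, hb⟩ := hon.exists_orthonormalBasis_extension_of_card_eq finrank_euclideanSpace
  refine ⟨(EuclideanSpace.basisFun n ℂ).toBasis.toMatrix b,
    OrthonormalBasis.toMatrix_orthonormalBasis_mem_unitary _ _, ?_⟩
  ext i
  simp [Module.Basis.toMatrix_apply, hb r rfl]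

theorem exists_mem_unitaryGroup_row_eq_smul {v : n → ℂ} (hv : v ≠ 0) (r : n) :
    ∃ c : ℂ, c ≠ 0 ∧ ∃ V ∈ unitaryGroup n ℂ, V r = c • v := by
  set u : EuclideanSpace ℂ n := WithLp.toLp 2 v with hu
  have hu0 : u ≠ 0 := by simpa [hu] using hv
  have hunit : star ((‖u‖⁻¹ : ℂ) • v) ⬝ᵥ ((‖u‖⁻¹ : ℂ) • v) = 1 := by
    rw [dotProduct_comm, ← EuclideanSpace.inner_toLp_toLp, WithLp.toLp_smul, ← hu,
      inner_self_eq_norm_sq_to_K, norm_smul, norm_inv, Complex.norm_real, norm_norm,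
      inv_mul_cancel₀ (norm_ne_zero_iff.2 hu0)]
    simp
  obtain ⟨W, hW, hWv⟩ := exists_mem_unitaryGroup_col_eq hunit r
  exact ⟨_, by simpa using hu0, Wᵀ, transpose_mem_unitaryGroup_iff.2 hW, hWv⟩

theorem exists_smul_mem_specialUnitaryGroup [Nonempty n] {U : Matrix n n ℂ}
    (hU : U ∈ unitaryGroup n ℂ) :
    ∃ c : ℂ, star c * c = 1 ∧ c • U ∈ specialUnitaryGroup n ℂ := by
  obtain ⟨c, hc⟩ := IsAlgClosed.exists_pow_nat_eq (star U.det) (Fintype.card_pos (α := n))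
  have hdet : star U.det * U.det = 1 := (det_of_mem_unitary hU).1
  have hnorm : ‖c‖ = 1 := by
    refine (pow_eq_one_iff_of_nonneg (norm_nonneg c) (Fintype.card_ne_zero (α := n))).1 ?_
    rw [← norm_pow, hc, norm_star]
    exact CStarRing.norm_of_mem_unitary (det_of_mem_unitary hU)
  have hcc : star c * c = 1 := by
    simp [Complex.conj_mul', hnorm]
  refine ⟨c, hcc, mem_specialUnitaryGroup_iff.2 ⟨mem_unitaryGroup_iff'.2 ?_, ?_⟩⟩
  · rw [star_smul, smul_mul_smul_comm, hcc, mem_unitaryGroup_iff'.1 hU, one_smul]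
  · rw [det_smul, hc, hdet]

theorem conjTranspose_eq_adjugate {U : Matrix n n ℂ} (hU : U ∈ specialUnitaryGroup n ℂ) :
    Uᴴ = U.adjugate := by
  obtain ⟨hunit, hdet⟩ := mem_specialUnitaryGroup_iff.1 hU
  rw [← star_eq_conjTranspose, ← inv_eq_left_inv (mem_unitaryGroup_iff'.1 hunit), inv_def, hdet,
    Ring.inverse_one, one_smul]

end UnitaryMatrices

section BilinearMaps

variable {n X : Type*} [Fintype n] [AddCommGroup X] [Module ℂ X]

theorem bilinear_eq_zero_of_vanishes_on_orthogonal [Nontrivial n]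
    (B : (n → ℂ) →ₗ[ℂ] (n → ℂ) →ₗ[ℂ] X) (hB : ∀ u v, star u ⬝ᵥ v = 0 → B u v = 0) : B = 0 := by
  classical
  have off_diag : ∀ i j, i ≠ j → B (Pi.single i 1) (Pi.single j 1) = 0 := fun i j hij =>
    hB _ _ (by simp [hij])
  have diag : ∀ i, B (Pi.single i 1) (Pi.single i 1) = 0 := by
    intro i
    obtain ⟨j, hji⟩ := exists_ne i
    have hsum := hB (Pi.single i 1 + Pi.single j 1) (Pi.single i 1 - Pi.single j 1)
      (by simp [hji, hji.symm])
    have hdiff := hB (Pi.single i 1 + Complex.I • Pi.single j 1)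
      (Pi.single i 1 - Complex.I • Pi.single j 1)
      (by simp [hji, hji.symm])
    simp only [map_add, map_sub, map_smul, LinearMap.add_apply, LinearMap.smul_apply,
      off_diag i j hji.symm, off_diag j i hji, smul_zero, zero_add, smul_smul,
      Complex.I_mul_I, neg_smul, one_smul, sub_neg_eq_add, add_zero] at hsum hdiff
    have htwo : (2 : ℂ) • B (Pi.single i 1) (Pi.single i 1) = 0 := by
      rw [two_smul]
      nth_rewrite 2 [sub_eq_zero.1 hsum]
      exact hdiff
    exact (smul_eq_zero.1 htwo).resolve_left two_ne_zero
  refine LinearMap.pi_ext' fun i => LinearMap.ext_ring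
    (LinearMap.pi_ext' fun j => LinearMap.ext_ring ?_)
  obtain rfl | hij := eq_or_ne i j
  · exact diag i
  · exact off_diag i j hij

variable [DecidableEq n]

/-- The bilinear map `K` kills every pair formed by a unitary matrix and a vector which is
Hermitian-orthogonal to its `r`-th row. -/
def VanishesOffRow (K : Matrix n n ℂ →ₗ[ℂ] (n → ℂ) →ₗ[ℂ] X) (r : n) : Prop :=
  ∀ V ∈ unitaryGroup n ℂ, ∀ x, star (V r) ⬝ᵥ x = 0 → K V x = 0

namespace VanishesOffRow

variable {K : Matrix n n ℂ →ₗ[ℂ] (n → ℂ) →ₗ[ℂ] X} {r : n}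

theorem vecMulVec_row (hK : VanishesOffRow K r) {V : Matrix n n ℂ} (hV : V ∈ unitaryGroup n ℂ)
    {x : n → ℂ} (hx : star (V r) ⬝ᵥ x = 0) (i : n) :
    K (vecMulVec (Pi.single i 1) (V i)) x = 0 := by
  set D : Matrix n n ℂ := diagonal fun j => if j = i then -1 else 1 with hD
  have hDu : D ∈ unitaryGroup n ℂ := by
    rw [mem_unitaryGroup_iff, hD, star_eq_conjTranspose, diagonal_conjTranspose,
      diagonal_mul_diagonal, ← diagonal_one]
    congr 1
    ext j
    by_cases h : j = i <;> simp [h]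
  have hflip : K (D * V) x = 0 := by
    refine hK _ (mul_mem hDu hV) x ?_
    have hrow : (D * V) r = (if r = i then (-1 : ℂ) else 1) • V r := by
      ext j
      simp only [hD, diagonal_mul, Pi.smul_apply, smul_eq_mul]
    rw [hrow, star_smul, smul_dotProduct, hx, smul_zero]
  have hdecomp : vecMulVec (Pi.single i 1) (V i) = (1 / 2 : ℂ) • (V - D * V) := by
    ext a b
    by_cases h : a = i
    · subst h
      simp [vecMulVec_apply, hD, diagonal_mul, ← two_mul]
    · simp [vecMulVec_apply, hD, diagonal_mul, h]
  rw [hdecomp, map_smul, map_sub, LinearMap.smul_apply, LinearMap.sub_apply, hK V hV x hx, hflip,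
    sub_zero, smul_zero]

theorem vecMulVec_single [Nontrivial n] (hK : VanishesOffRow K r) (b x : n → ℂ) :
    K (vecMulVec (Pi.single r 1) b) x = 0 := by
  suffices h : K ∘ₗ vecMulVecBilin ℂ ℂ (Pi.single r 1) = 0 from LinearMap.congr_fun₂ h b x
  refine bilinear_eq_zero_of_vanishes_on_orthogonal _ fun b x hbx => ?_
  obtain rfl | hb := eq_or_ne b 0
  · simp
  obtain ⟨c, hc, V, hV, hVr⟩ := exists_mem_unitaryGroup_row_eq_smul hb r
  have horth : star (V r) ⬝ᵥ x = 0 := by rw [hVr, star_smul, smul_dotProduct, hbx, smul_zero]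
  have hrow := hK.vecMulVec_row hV horth r
  rw [hVr, vecMulVec_smul, map_smul, LinearMap.smul_apply] at hrow
  exact (smul_eq_zero.1 hrow).resolve_left hc

theorem eq_zero (hK : VanishesOffRow K r) (hn : 3 ≤ Fintype.card n) : K = 0 := by
  have : Nontrivial n := Fintype.one_lt_card_iff_nontrivial.1 (by omega)
  refine ext_linearMap _ fun i j => LinearMap.ext_ring
    (LinearMap.pi_ext' fun k => LinearMap.ext_ring ?_)
  change K (single i j 1) (Pi.single k 1) = 0
  rw [single_eq_single_vecMulVec_single]
  obtain rfl | hir := eq_or_ne i r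
  · exact hK.vecMulVec_single _ _
  obtain ⟨l, hlj, hlk⟩ := ENat.exists_ne_ne_of_three_le (α := n) (by simpa using hn) j k
  obtain ⟨σ, hσi, hσr⟩ := MulAction.is_two_pretransitive_iff.1
    (Equiv.Perm.isMultiplyPretransitive n 2) hir hlj.symm
  rw [Equiv.Perm.smul_def] at hσi hσr
  have hrow := hK.vecMulVec_row (permMatrix_mem_unitaryGroup σ) (x := Pi.single k 1)
    (by simp [hσr, hlk]) i
  rwa [Equiv.Perm.permMatrix, PEquiv.toMatrix_toPEquiv_apply, hσi] at hrow

end VanishesOffRow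

theorem VanishesOffRow.apply_eq_of_fin_two
    {K : Matrix (Fin 2) (Fin 2) ℂ →ₗ[ℂ] (Fin 2 → ℂ) →ₗ[ℂ] X}
    (hK : VanishesOffRow K 0) (V : Matrix (Fin 2) (Fin 2) ℂ) (x : Fin 2 → ℂ) :
    K V x = K (vecMulVec (Pi.single 1 1) (V 1)) x := by
  conv_lhs => rw [eq_sum_vecMulVec_single_row V, Fin.sum_univ_two]
  rw [map_add, LinearMap.add_apply, hK.vecMulVec_single, zero_add]

end BilinearMaps

section PartialTraces

theorem ptrRight_add {α β : Type*} [Fintype β] (S T : Matrix (α × β) (α × β) ℂ) :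
    ptrRight (S + T) = ptrRight S + ptrRight T := by
  ext
  simp only [ptrRight, Matrix.add_apply, Finset.sum_add_distrib]

theorem ptrRight_smul {α β : Type*} [Fintype β] (c : ℂ) (S : Matrix (α × β) (α × β) ℂ) :
    ptrRight (c • S) = c • ptrRight S := by
  ext
  simp only [ptrRight, Matrix.smul_apply, Finset.smul_sum]

theorem posSemidef_outer {α : Type*} [Finite α] (v : α → ℂ) : (outer v).PosSemidef :=
  posSemidef_vecMulVec_self_star v

theorem mul_outer_mul_conjTranspose {α β : Type*} [Fintype α] (M : Matrix β α ℂ) (v : α → ℂ) :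
    M * outer v * Mᴴ = outer (M *ᵥ v) := by
  rw [outer, outer, mul_vecMulVec, vecMulVec_mul, star_mulVec]

variable {α β : Type*} [Fintype α] [Fintype β]

theorem quadForm_outer (v x : α → ℂ) :
    star x ⬝ᵥ (outer v *ᵥ x) = star (star v ⬝ᵥ x) * (star v ⬝ᵥ x) := by
  rw [outer, vecMulVec_mulVec, dotProduct_smul, op_smul_eq_mul,
    star_dotProduct v x, star_star]

theorem quadForm_congr_of_mulVec_eq {S : Matrix α α ℂ} (hS : S.IsHermitian) {u v : α → ℂ}
    (h : S *ᵥ u = S *ᵥ v) : star u ⬝ᵥ (S *ᵥ u) = star v ⬝ᵥ (S *ᵥ v) := by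
  have hadj : ∀ a b : α → ℂ, star a ⬝ᵥ (S *ᵥ b) = star (S *ᵥ a) ⬝ᵥ b := fun a b => by
    rw [star_mulVec, hS.eq, dotProduct_mulVec]
  rw [h, hadj, h, ← hadj]

/-- The tensor product `v ⊗ x` of two coordinate vectors, as a bilinear map. -/
def tensorVec {α β : Type*} : (α → ℂ) →ₗ[ℂ] (β → ℂ) →ₗ[ℂ] (α × β → ℂ) :=
  LinearMap.mk₂ ℂ (fun v x q => v q.1 * x q.2)
    (fun _ _ _ => funext fun _ => add_mul _ _ _)
    (fun _ _ _ => funext fun _ => mul_assoc _ _ _)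
    (fun _ _ _ => funext fun _ => mul_add _ _ _)
    (fun _ _ _ => funext fun _ => mul_left_comm _ _ _)

theorem tensorVec_apply {α β : Type*} (v : α → ℂ) (x : β → ℂ) (q : α × β) :
    tensorVec v x q = v q.1 * x q.2 := rfl

theorem quadForm_kronecker_tensorVec (A : Matrix α α ℂ) (B : Matrix β β ℂ) (v : α → ℂ)
    (x : β → ℂ) :
    star (tensorVec v x) ⬝ᵥ ((A ⊗ₖ B) *ᵥ tensorVec v x) =
      (star v ⬝ᵥ (A *ᵥ v)) * (star x ⬝ᵥ (B *ᵥ x)) := by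
  have hmul : (A ⊗ₖ B) *ᵥ tensorVec v x = tensorVec (A *ᵥ v) (B *ᵥ x) := by
    ext q
    simp only [mulVec, dotProduct, tensorVec_apply, kroneckerMap_apply, Fintype.sum_prod_type,
      Finset.sum_mul_sum, mul_mul_mul_comm]
  rw [hmul]
  simp only [dotProduct, tensorVec_apply, Pi.star_apply, star_mul', Fintype.sum_prod_type,
    Finset.sum_mul_sum, mul_mul_mul_comm]

theorem sum_quadForm_tensorVec_single [DecidableEq β] (S : Matrix (α × β) (α × β) ℂ) (v : α → ℂ) :
    ∑ k, star (tensorVec v (Pi.single k 1)) ⬝ᵥ (S *ᵥ tensorVec v (Pi.single k 1)) =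
      star v ⬝ᵥ (ptrRight S *ᵥ v) := by
  have hterm : ∀ k, star (tensorVec v (Pi.single k 1)) ⬝ᵥ (S *ᵥ tensorVec v (Pi.single k 1)) =
      ∑ a, ∑ a', star (v a) * (S (a, k) (a', k) * v a') := fun k => by
    simp [dotProduct, mulVec, tensorVec_apply, Fintype.sum_prod_type, Pi.single_apply,
      Finset.mul_sum, apply_ite]
  rw [Finset.sum_congr rfl fun k _ => hterm k, Finset.sum_comm]
  refine Finset.sum_congr rfl fun a _ => ?_
  rw [Finset.sum_comm]
  simp only [mulVec, dotProduct, ptrRight, Finset.mul_sum, Finset.sum_mul, Pi.star_apply]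

theorem quadForm_tensorVec_single_le_ptrRight [DecidableEq β] {S Sch : Matrix (α × β) (α × β) ℂ}
    (hS : S.PosSemidef) (hle : (Sch - S).PosSemidef) (v : α → ℂ) (k : β) :
    star (tensorVec v (Pi.single k 1)) ⬝ᵥ (S *ᵥ tensorVec v (Pi.single k 1)) ≤
      star v ⬝ᵥ (ptrRight Sch *ᵥ v) := by
  have hSch : Sch.PosSemidef := by simpa using hle.add hS
  calc star (tensorVec v (Pi.single k 1)) ⬝ᵥ (S *ᵥ tensorVec v (Pi.single k 1))
      ≤ star (tensorVec v (Pi.single k 1)) ⬝ᵥ (Sch *ᵥ tensorVec v (Pi.single k 1)) := by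
        have hgap := hle.dotProduct_mulVec_nonneg (tensorVec v (Pi.single k 1))
        rwa [sub_mulVec, dotProduct_sub, sub_nonneg] at hgap
    _ ≤ ∑ l, star (tensorVec v (Pi.single l 1)) ⬝ᵥ (Sch *ᵥ tensorVec v (Pi.single l 1)) :=
        Finset.single_le_sum
          (f := fun l => star (tensorVec v (Pi.single l 1)) ⬝ᵥ (Sch *ᵥ tensorVec v (Pi.single l 1)))
          (fun l _ => hSch.dotProduct_mulVec_nonneg _) (Finset.mem_univ k)
    _ = star v ⬝ᵥ (ptrRight Sch *ᵥ v) := sum_quadForm_tensorVec_single Sch v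

theorem ptrLeft_mul_outer_kronecker_one_apply [DecidableEq β] (S : Matrix (α × β) (α × β) ℂ)
    (v : α → ℂ) (b b' : β) :
    ptrLeft (S * (outer v ⊗ₖ (1 : Matrix β β ℂ))) b b' =
      ∑ a, ∑ a', star (v a) * S (a, b) (a', b') * v a' := by
  refine Finset.sum_congr rfl fun a _ => ?_
  rw [Matrix.mul_apply, Fintype.sum_prod_type]
  refine Finset.sum_congr rfl fun a' _ => ?_
  simp only [kroneckerMap_apply, outer, vecMulVec_apply, Pi.star_apply, one_apply, mul_ite, mul_one,
    mul_zero, Finset.sum_ite_eq', Finset.mem_univ, if_true]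
  ring

theorem ptrLeft_outer_mul_outer_kronecker_one [DecidableEq β] (w : α × β → ℂ)
    (v : α → ℂ) :
    ptrLeft (outer w * (outer v ⊗ₖ (1 : Matrix β β ℂ))) =
      outer fun b => ∑ a, star (v a) * w (a, b) := by
  ext b b'
  rw [ptrLeft_mul_outer_kronecker_one_apply]
  simp only [outer, vecMulVec_apply, Pi.star_apply, star_sum, star_mul', star_star,
    Finset.sum_mul_sum]
  refine Finset.sum_congr rfl fun a _ => Finset.sum_congr rfl fun a' _ => ?_
  ring

theorem quadForm_ptrLeft_mul_outer_kronecker_one [DecidableEq β] (S : Matrix (α × β) (α × β) ℂ)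
    (v : α → ℂ) (x : β → ℂ) :
    star x ⬝ᵥ (ptrLeft (S * (outer v ⊗ₖ (1 : Matrix β β ℂ))) *ᵥ x) =
      star (tensorVec v x) ⬝ᵥ (S *ᵥ tensorVec v x) := by
  simp only [dotProduct, Fintype.sum_prod_type_right, mulVec,
    ptrLeft_mul_outer_kronecker_one_apply, Finset.mul_sum, Finset.sum_mul, Pi.star_apply,
    tensorVec_apply, star_mul']
  refine Finset.sum_congr rfl fun b _ => ?_
  conv_rhs => rw [Finset.sum_comm]
  refine Finset.sum_congr rfl fun b' _ => Finset.sum_congr rfl fun a _ =>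
    Finset.sum_congr rfl fun a' _ => ?_
  ring

end PartialTraces

section Protocols

variable {d dF : ℕ}

theorem choiVec_vecMulVec (a b : Fin d → ℂ) : choiVec (vecMulVec a b) = tensorVec b a :=
  funext fun _ => mul_comm _ _

theorem mconj_mconj (U : Matrix (Fin d) (Fin d) ℂ) : mconj (mconj U) = U := by
  ext
  simp [mconj]

theorem mconj_mul (U V : Matrix (Fin d) (Fin d) ℂ) : mconj (U * V) = mconj U * mconj V :=
  Matrix.map_mul

theorem conjTranspose_mconj (U : Matrix (Fin d) (Fin d) ℂ) : (mconj U)ᴴ = Uᵀ := by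
  ext
  simp [mconj]

theorem mconj_mem_unitaryGroup {U : Matrix (Fin d) (Fin d) ℂ}
    (hU : U ∈ unitaryGroup (Fin d) ℂ) : mconj U ∈ unitaryGroup (Fin d) ℂ :=
  map_star_mem_unitaryGroup_iff.2 hU

theorem choiProj_smul_of_star_mul_self {c : ℂ} (hc : star c * c = 1)
    (U : Matrix (Fin d) (Fin d) ℂ) : choiProj (c • U) = choiProj U := by
  change outer (c • choiVec U) = outer (choiVec U)
  rw [outer, star_smul, smul_vecMulVec, vecMulVec_smul, smul_smul, mul_comm, hc, one_smul, outer]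

theorem act_smul_of_star_mul_self {c : ℂ} (hc : star c * c = 1)
    (S : Matrix ((Fin d × Fin d) × Fin dF) ((Fin d × Fin d) × Fin dF) ℂ)
    (U : Matrix (Fin d) (Fin d) ℂ) : act S (c • U) = act S U := by
  have hmconj : mconj (c • U) = star c • mconj U := by
    ext
    simp [mconj]
  rw [act, act, hmconj, choiProj_smul_of_star_mul_self (by rwa [star_star, mul_comm])]

theorem act_smul_left (c : ℂ)
    (S : Matrix ((Fin d × Fin d) × Fin dF) ((Fin d × Fin d) × Fin dF) ℂ)
    (U : Matrix (Fin d) (Fin d) ℂ) : act (c • S) U = c • act S U := by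
  ext b b'
  simp only [act, ptrLeft, smul_mul_assoc, Matrix.smul_apply, Finset.smul_sum]

theorem quadForm_act (S : Matrix ((Fin d × Fin d) × Fin dF) ((Fin d × Fin d) × Fin dF) ℂ)
    (U : Matrix (Fin d) (Fin d) ℂ) (x : Fin dF → ℂ) :
    star x ⬝ᵥ (act S U *ᵥ x) = star (tensorVec (choiVec (mconj U)) x) ⬝ᵥ
      (S *ᵥ tensorVec (choiVec (mconj U)) x) :=
  quadForm_ptrLeft_mul_outer_kronecker_one S (choiVec (mconj U)) x

/-- The exact inversion property on the state `ψ` with success weight `p`, required of every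
unitary matrix rather than only of `SU(d)`. -/
def InvertsOn (S : Matrix ((Fin d × Fin d) × Fin d) ((Fin d × Fin d) × Fin d) ℂ) (p : ℂ)
    (ψ : Fin d → ℂ) : Prop :=
  ∀ U ∈ unitaryGroup (Fin d) ℂ, act S U = p • outer (Uᴴ *ᵥ ψ)

theorem invertsOn_of_forall_mem_specialUnitaryGroup [NeZero d]
    {S : Matrix ((Fin d × Fin d) × Fin d) ((Fin d × Fin d) × Fin d) ℂ} {p : ℂ} {ψ : Fin d → ℂ}
    (h : ∀ U ∈ specialUnitaryGroup (Fin d) ℂ, act S U = p • (Uᴴ * outer ψ * U)) :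
    InvertsOn S p ψ := by
  intro U hU
  obtain ⟨c, hc, hcU⟩ := exists_smul_mem_specialUnitaryGroup hU
  calc act S U = act S (c • U) := (act_smul_of_star_mul_self hc S U).symm
    _ = p • ((c • U)ᴴ * outer ψ * (c • U)) := h _ hcU
    _ = p • (Uᴴ * outer ψ * Uᴴᴴ) := by
      rw [conjTranspose_smul, smul_mul_assoc, smul_mul_smul_comm, hc, one_smul,
        conjTranspose_conjTranspose]
    _ = p • outer (Uᴴ *ᵥ ψ) := by rw [mul_outer_mul_conjTranspose]

/-- The bilinear map `(M, x) ↦ |W̅M⟩⟩ ⊗ x`. Left translation by `W̅` moves the state `W e_r` to be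
inverted to the basis vector `e_r`. -/
def choiTensor (W : Matrix (Fin d) (Fin d) ℂ) :
    Matrix (Fin d) (Fin d) ℂ →ₗ[ℂ] (Fin dF → ℂ) →ₗ[ℂ] ((Fin d × Fin d) × Fin dF → ℂ) :=
  tensorVec ∘ₗ
    { toFun := fun M => choiVec (mconj W * M)
      map_add' := fun M N => by rw [mul_add]; rfl
      map_smul' := fun c M => by rw [mul_smul_comm]; rfl }

theorem choiTensor_apply (W M : Matrix (Fin d) (Fin d) ℂ) (x : Fin dF → ℂ) :
    choiTensor W M x = tensorVec (choiVec (mconj W * M)) x := rfl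

namespace InvertsOn

variable {S : Matrix ((Fin d × Fin d) × Fin d) ((Fin d × Fin d) × Fin d) ℂ} {p : ℂ}
  {ψ : Fin d → ℂ} {W : Matrix (Fin d) (Fin d) ℂ} {r : Fin d}

theorem quadForm_choiTensor (h : InvertsOn S p ψ) (hW : W ∈ unitaryGroup (Fin d) ℂ)
    (hWψ : W.col r = ψ) {V : Matrix (Fin d) (Fin d) ℂ} (hV : V ∈ unitaryGroup (Fin d) ℂ)
    (x : Fin d → ℂ) :
    star (choiTensor W V x) ⬝ᵥ (S *ᵥ choiTensor W V x) =
      p * (star (star (V r) ⬝ᵥ x) * (star (V r) ⬝ᵥ x)) := by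
  have hstate : (W * mconj V)ᴴ *ᵥ ψ = V r := by
    rw [← hWψ, ← mulVec_single_one, mulVec_mulVec, conjTranspose_mul, mul_assoc,
      ← star_eq_conjTranspose W, mem_unitaryGroup_iff'.1 hW, mul_one, conjTranspose_mconj,
      mulVec_single_one]
    rfl
  rw [choiTensor_apply, ← mconj_mconj V, ← mconj_mul, ← quadForm_act,
    h _ (mul_mem hW (mconj_mem_unitaryGroup hV)), hstate, smul_mulVec, dotProduct_smul,
    quadForm_outer, smul_eq_mul, mconj_mconj]

theorem vanishesOffRow (h : InvertsOn S p ψ) (hS : S.PosSemidef)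
    (hW : W ∈ unitaryGroup (Fin d) ℂ) (hWψ : W.col r = ψ) :
    VanishesOffRow ((choiTensor W).compr₂ S.mulVecLin) r := by
  intro V hV x hx
  refine (hS.dotProduct_mulVec_zero_iff _).1 ?_
  rw [h.quadForm_choiTensor hW hWψ hV, hx, mul_zero, mul_zero]

theorem eq_zero_of_three_le (h : InvertsOn S p ψ) (hS : S.PosSemidef) (hψ : star ψ ⬝ᵥ ψ = 1)
    (hd : 3 ≤ d) : p = 0 := by
  set r : Fin d := ⟨0, by omega⟩
  obtain ⟨W, hW, hWψ⟩ := exists_mem_unitaryGroup_col_eq hψ r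
  have hkernel := (h.vanishesOffRow hS hW hWψ).eq_zero (by simpa using hd)
  have hSr : S *ᵥ choiTensor W 1 (Pi.single r 1) = 0 :=
    LinearMap.congr_fun₂ hkernel 1 (Pi.single r 1)
  have hp := h.quadForm_choiTensor hW hWψ (one_mem _) (Pi.single r 1)
  simpa [hSr, one_apply] using hp.symm

end InvertsOn

end Protocols

section Qubit

variable {S Sch : Matrix ((Fin 2 × Fin 2) × Fin 2) ((Fin 2 × Fin 2) × Fin 2) ℂ}
  {ψ : Fin 2 → ℂ} {σ : Matrix (Fin 2) (Fin 2) ℂ}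

theorem InvertsOn.le_marginal {p : ℂ} (h : InvertsOn S p ψ) (hψ : star ψ ⬝ᵥ ψ = 1)
    (hS : S.PosSemidef) (hle : (Sch - S).PosSemidef)
    (hσ : ptrRight Sch = σ ⊗ₖ (1 : Matrix (Fin 2) (Fin 2) ℂ)) (j : Fin 2) : p ≤ σ j j := by
  obtain ⟨W, hW, hWψ⟩ := exists_mem_unitaryGroup_col_eq hψ 0
  set τ := Equiv.swap 1 j
  set V := τ.permMatrix ℂ
  set x : Fin 2 → ℂ := Pi.single (τ 0) 1
  set a := mconj W *ᵥ Pi.single 1 1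
  have hrow : ∀ i, V i = Pi.single (τ i) 1 := PEquiv.toMatrix_toPEquiv_apply τ
  have hkernel : S *ᵥ choiTensor W V x = S *ᵥ tensorVec (tensorVec (Pi.single j 1) a) x := by
    have hK := (h.vanishesOffRow hS hW hWψ).apply_eq_of_fin_two V x
    rw [hrow, Equiv.swap_apply_left] at hK
    rwa [← choiVec_vecMulVec, ← mul_vecMulVec]
  have hz : star (V 0) ⬝ᵥ x = 1 := by
    rw [hrow, dotProduct_single_one, Pi.star_apply, Pi.single_eq_same, star_one]
  calc p = star (choiTensor W V x) ⬝ᵥ (S *ᵥ choiTensor W V x) := by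
        rw [h.quadForm_choiTensor hW hWψ (permMatrix_mem_unitaryGroup τ), hz, star_one, mul_one,
          mul_one]
    _ = star (tensorVec (tensorVec (Pi.single j 1) a) x) ⬝ᵥ
          (S *ᵥ tensorVec (tensorVec (Pi.single j 1) a) x) :=
        quadForm_congr_of_mulVec_eq hS.isHermitian hkernel
    _ ≤ star (tensorVec (Pi.single j 1) a) ⬝ᵥ (ptrRight Sch *ᵥ tensorVec (Pi.single j 1) a) :=
        quadForm_tensorVec_single_le_ptrRight hS hle _ _
    _ = σ j j := by
        rw [hσ, quadForm_kronecker_tensorVec, one_mulVec,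
          star_mulVec_dotProduct_mulVec (mconj_mem_unitaryGroup hW)]
        simp

theorem InvertsOn.le_half {p : ℝ} (h : InvertsOn S p ψ) (hψ : star ψ ⬝ᵥ ψ = 1)
    (hS : IsProtocol S Sch) : p ≤ 1 / 2 := by
  obtain ⟨hpos, hle, σ, -, htrace, hσ⟩ := hS
  have hsum : (p : ℂ) + p ≤ 1 := by
    rw [← htrace, trace_fin_two]
    exact add_le_add (h.le_marginal hψ hpos hle hσ 0) (h.le_marginal hψ hpos hle hσ 1)
  have hsum' : p + p ≤ 1 := by exact_mod_cast hsum
  linarith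

end Qubit

section Probe

variable {d : ℕ}

/-- The vector on `I ⊗ O ⊗ F` describing the protocol which feeds the `I` half of
`∑ J f i • e_i ⊗ e_f` into the channel, keeps the other half as the output `F`, and succeeds when
the channel output `O` is found in the state `φ̅`. -/
def entangledProbe (J : Matrix (Fin d) (Fin d) ℂ) (φ : Fin d → ℂ) :
    (Fin d × Fin d) × Fin d → ℂ :=
  fun q => J q.2 q.1.1 * φ q.1.2

theorem act_outer_entangledProbe (J U : Matrix (Fin d) (Fin d) ℂ) (φ : Fin d → ℂ) :
    act (outer (entangledProbe J φ)) U = outer ((J * Uᵀ) *ᵥ φ) := by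
  rw [act, choiProj, ptrLeft_outer_mul_outer_kronecker_one]
  congr 1
  ext f
  simp only [choiVec, mconj, map_apply, starRingEnd_apply, star_star, entangledProbe, mulVec,
    dotProduct, Matrix.mul_apply, transpose_apply, Finset.sum_mul, Fintype.sum_prod_type_right]
  refine Finset.sum_congr rfl fun o _ => Finset.sum_congr rfl fun i _ => ?_
  ring

theorem ptrRight_outer_entangledProbe (J : Matrix (Fin d) (Fin d) ℂ) (φ : Fin d → ℂ) :
    ptrRight (outer (entangledProbe J φ)) = (Jᵀ * mconj J) ⊗ₖ outer φ := by
  ext a a'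
  simp only [ptrRight, outer, vecMulVec_apply, Pi.star_apply, entangledProbe, star_mul',
    kroneckerMap_apply, Matrix.mul_apply, transpose_apply, mconj, map_apply, starRingEnd_apply,
    Finset.sum_mul, mul_mul_mul_comm]

/-- The coefficient matrix of the (unnormalised) two-qubit singlet state. -/
def singletMatrix : Matrix (Fin 2) (Fin 2) ℂ := !![0, 1; -1, 0]

theorem singletMatrix_mul_transpose_mul_transpose (U : Matrix (Fin 2) (Fin 2) ℂ) :
    singletMatrix * Uᵀ * singletMatrixᵀ = U.adjugate := by
  ext i j
  simp only [singletMatrix, adjugate_fin_two, Matrix.mul_apply, Fin.sum_univ_two, transpose_apply]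
  fin_cases i <;> fin_cases j <;> simp

theorem singletMatrix_transpose_mul_mconj : singletMatrixᵀ * mconj singletMatrix = 1 := by
  ext i j
  fin_cases i <;> fin_cases j <;>
    simp [singletMatrix, mconj, Matrix.mul_apply, Fin.sum_univ_two]

theorem outer_singletMatrix_transpose_mulVec_add_outer_star {ψ : Fin 2 → ℂ}
    (hψ : star ψ ⬝ᵥ ψ = 1) : outer (singletMatrixᵀ *ᵥ ψ) + outer (star ψ) = 1 := by
  have hnorm : star (ψ 0) * ψ 0 + star (ψ 1) * ψ 1 = 1 := by
    simpa [dotProduct, Fin.sum_univ_two] using hψ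
  have hperp : singletMatrixᵀ *ᵥ ψ = ![-ψ 1, ψ 0] := by
    ext i
    fin_cases i <;> simp [singletMatrix, mulVec, dotProduct]
  rw [hperp]
  ext i j
  simp only [outer, Matrix.add_apply, vecMulVec_apply, Pi.star_apply, star_star]
  fin_cases i <;> fin_cases j
  · simpa [add_comm, mul_comm] using hnorm
  · simp [mul_comm]
  · simp [mul_comm]
  · simpa [mul_comm] using hnorm

theorem exists_isProtocol_act_eq_half {ψ : Fin 2 → ℂ} (hψ : star ψ ⬝ᵥ ψ = 1) :
    ∃ S Sch : Matrix ((Fin 2 × Fin 2) × Fin 2) ((Fin 2 × Fin 2) × Fin 2) ℂ, IsProtocol S Sch ∧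
      ∀ U ∈ specialUnitaryGroup (Fin 2) ℂ, act S U = (1 / 2 : ℂ) • (Uᴴ * outer ψ * U) := by
  set probe : (Fin 2 → ℂ) → Matrix ((Fin 2 × Fin 2) × Fin 2) ((Fin 2 × Fin 2) × Fin 2) ℂ :=
    fun φ => (1 / 2 : ℂ) • outer (entangledProbe singletMatrix φ)
  have hhalf : (0 : ℂ) ≤ 1 / 2 := by positivity
  have hprobe : ∀ φ, (probe φ).PosSemidef := fun φ => (posSemidef_outer _).smul hhalf
  have hptr : ∀ φ, ptrRight (probe φ) = ((1 / 2 : ℂ) • 1) ⊗ₖ outer φ := fun φ => by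
    rw [ptrRight_smul, ptrRight_outer_entangledProbe, singletMatrix_transpose_mul_mconj,
      smul_kronecker]
  refine ⟨probe (singletMatrixᵀ *ᵥ ψ), probe (singletMatrixᵀ *ᵥ ψ) + probe (star ψ),
    ⟨hprobe _, ?_, (1 / 2 : ℂ) • 1, PosSemidef.one.smul hhalf, ?_, ?_⟩, fun U hU => ?_⟩
  · rw [add_sub_cancel_left]
    exact hprobe _
  · simp
  · rw [ptrRight_add, hptr, hptr, ← kronecker_add,
      outer_singletMatrix_transpose_mulVec_add_outer_star hψ]
  · rw [act_smul_left, act_outer_entangledProbe, mulVec_mulVec,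
      singletMatrix_mul_transpose_mul_transpose, ← conjTranspose_eq_adjugate hU,
      ← mul_outer_mul_conjTranspose, conjTranspose_conjTranspose]

end Probe

/-- **Probabilistic exact unitary inversion on a known pure state, single call.**
For `d > 2` every protocol implementing `U ↦ p · U†|ψ⟩⟨ψ|U` for all `U ∈ SU(d)` has
`p = 0`; for `d = 2` every such protocol has `p ≤ 1/2` and this value is attained. -/
theorem inversion_single_call_known_pure_state
    (d : ℕ) (hd : 2 ≤ d) (ψ : Fin d → ℂ) (hψ : star ψ ⬝ᵥ ψ = 1) :
    (2 < d →
      ∀ (S Sch : Matrix ((Fin d × Fin d) × Fin d) ((Fin d × Fin d) × Fin d) ℂ) (p : ℝ),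
        IsProtocol S Sch →
        (∀ U : Matrix (Fin d) (Fin d) ℂ, U ∈ Matrix.specialUnitaryGroup (Fin d) ℂ →
          act S U = (p : ℂ) • (Uᴴ * outer ψ * U)) →
        p = 0) ∧
    (d = 2 →
      (∀ (S Sch : Matrix ((Fin d × Fin d) × Fin d) ((Fin d × Fin d) × Fin d) ℂ) (p : ℝ),
        IsProtocol S Sch →
        (∀ U : Matrix (Fin d) (Fin d) ℂ, U ∈ Matrix.specialUnitaryGroup (Fin d) ℂ →
          act S U = (p : ℂ) • (Uᴴ * outer ψ * U)) →
        p ≤ 1 / 2) ∧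
      (∃ S Sch : Matrix ((Fin d × Fin d) × Fin d) ((Fin d × Fin d) × Fin d) ℂ,
        IsProtocol S Sch ∧
        ∀ U : Matrix (Fin d) (Fin d) ℂ, U ∈ Matrix.specialUnitaryGroup (Fin d) ℂ →
          act S U = ((1 / 2 : ℝ) : ℂ) • (Uᴴ * outer ψ * U))) := by
  have : NeZero d := ⟨by omega⟩
  refine ⟨fun hd2 S Sch p hS hact => ?_, ?_⟩
  · exact_mod_cast (invertsOn_of_forall_mem_specialUnitaryGroup hact).eq_zero_of_three_le
      hS.1 hψ hd2
  · rintro rfl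
    refine ⟨fun S Sch p hS hact =>
      (invertsOn_of_forall_mem_specialUnitaryGroup hact).le_half hψ hS, ?_⟩
    simpa using exists_isProtocol_act_eq_half hψ
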